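/- Suppose $\{v_n\}$ and $\{w_m\}$ are $1/2$-uniformly distributed sequences in $[0,1]^d$, $d \geq 2$, and fix $\frac{1}{100} \leq t < d$. Then for every $\epsilon > 0$ there exists $C_\epsilon > 0$ such that $\#\{(n,m) \in [1,N]^2 : v_n \cdot w_m = t\} \leq C_\epsilon N^{3/2 + \epsilon}$ for all $N$. -/

import Mathlib

open Finset

/-- Euclidean norm of an integer vector `k ∈ ℤ^d`. -/
noncomputable def intNorm {d : ℕ} (k : Fin d → ℤ) : ℝ :=
  Real.sqrt (∑ i, ((k i : ℝ)) ^ 2)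

/-- The Euclidean dot product on `[0,1]^d ⊂ ℝ^d`. -/
def dotP {d : ℕ} (x y : Fin d → ℝ) : ℝ := ∑ i, x i * y i

/-- A sequence `{v_n}` in `[0,1]^d` is `γ`-uniformly distributed. -/
def IsGammaUD {d : ℕ} (γ : ℝ) (v : ℕ → Fin d → ℝ) : Prop :=
  ∀ ε : ℝ, 0 < ε → ∃ C : ℝ, 0 < C ∧ ∀ k : Fin d → ℤ, k ≠ 0 → ∀ N : ℕ, 1 ≤ N →
    ‖(N : ℂ)⁻¹ * ∑ n ∈ Finset.range N,
        Complex.exp (2 * Real.pi * Complex.I * (∑ i, (k i : ℝ) * v n i))‖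
      ≤ C * intNorm k ^ ε * (N : ℝ) ^ (-γ)

/-!
It suffices to bound the number of points `v n` on a single hyperplane `x ⬝ y = t`, uniformly in
`y ≠ 0`, and to sum over `y = w m`. Let `y i` be the coordinate of largest modulus. On a box of side
`1 / 2` the function `x i + ∑ l ≠ i, (y l / y i) * fract (x l - β l)` is constant along the
hyperplane, and expanding a Fejér kernel in this phase bounds the count by exponential sums with an
integer frequency `m ≠ 0` in the `i`-th coordinate. In the other coordinates the frequency
`m * y l / y i` need not be an integer; weighting by a bump which vanishes at the jump of the
fractional part turns that factor into an absolutely convergent Fourier series concentrated near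
`m * y l / y i`, so only integer frequencies, with nonzero `i`-th entry, remain and uniform
distribution applies to each of them. Taking `|m| < N` gives the bound, and `2 ^ d` boxes cover the
cube.
-/

section HyperplaneCount

open Real
open scoped FourierTransform

section Fourier

lemma fourierChar_intCast (k : ℤ) : 𝐞 (k : ℝ) = 1 := by
  rw [fourierChar_apply', mul_comm]
  exact_mod_cast Circle.exp_int_mul_two_pi k

lemma fourierChar_intCast_mul_fract (k : ℤ) (x : ℝ) : 𝐞 (k * Int.fract x) = 𝐞 (k * x) := by
  have h : k * x = k * Int.fract x + (k * ⌊x⌋ : ℤ) := by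
    push_cast
    rw [← mul_add, Int.fract_add_floor]
  rw [h, AddChar.map_add_eq_mul, fourierChar_intCast, mul_one]

lemma coe_fourierChar_add (x y : ℝ) : (𝐞 (x + y) : ℂ) = 𝐞 x * 𝐞 y := by
  rw [AddChar.map_add_eq_mul, Circle.coe_mul]

lemma coe_fourierChar_sum {ι : Type*} (s : Finset ι) (f : ι → ℝ) :
    (𝐞 (∑ l ∈ s, f l) : ℂ) = ∏ l ∈ s, (𝐞 (f l) : ℂ) :=
  map_prod (Circle.coeHom.comp 𝐞.toMonoidHom) (fun l ↦ Multiplicative.ofAdd (f l)) s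

lemma hasSum_fourierChar_fract {f : ℝ → ℂ} (hf : ContinuousOn f (Set.Icc 0 1)) (h01 : f 0 = f 1)
    (hs : Summable fun k : ℤ ↦ ∫ y in (0 : ℝ)..1, f y * 𝐞 (-(k * y))) (x : ℝ) :
    HasSum (fun k : ℤ ↦ (∫ y in (0 : ℝ)..1, f y * 𝐞 (-(k * y))) * 𝐞 (k * x))
      (f (Int.fract x)) := by
  let F : C(AddCircle (1 : ℝ), ℂ) :=
    ⟨AddCircle.liftIco 1 0 f, AddCircle.liftIco_zero_continuous h01 hf⟩
  have hcoeff : fourierCoeff F = fun k : ℤ ↦ ∫ y in (0 : ℝ)..1, f y * 𝐞 (-(k * y)) := by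
    funext k
    simp only [F, ContinuousMap.coe_mk, fourierCoeff_liftIco_eq, fourierCoeffOn_eq_integral,
      zero_add, sub_zero, div_one, one_smul, smul_eq_mul, mul_comm, fourier_coe_apply,
      fourierChar_apply]
    refine intervalIntegral.integral_congr fun y _ ↦ ?_
    push_cast
    ring_nf
  have hsum := has_pointwise_sum_fourier_series_of_summable (hcoeff ▸ hs)
    ((Int.fract x : ℝ) : AddCircle (1 : ℝ))
  convert hsum using 1
  · funext k
    rw [hcoeff, ← fourierChar_intCast_mul_fract, fourier_coe_apply, smul_eq_mul, fourierChar_apply]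
    push_cast
    ring_nf
  · exact (AddCircle.liftIco_zero_coe_apply ⟨Int.fract_nonneg x, Int.fract_lt_one x⟩).symm

end Fourier

section Beurling

/-- `g` lies in the Beurling algebra of `1`-periodic functions with weight `(1 + |k|) ^ ε`, with
norm at most `M`: it is the sum of a Fourier series with `∑ |c k| (1 + |k|) ^ ε ≤ M`. -/
def BeurlingNormLE (ε : ℝ) (g : ℝ → ℂ) (M : ℝ) : Prop :=
  ∃ c : ℤ → ℂ, (∀ x, HasSum (fun k : ℤ ↦ c k * 𝐞 (k * x)) (g x)) ∧
    Summable (fun k : ℤ ↦ ‖c k‖ * (1 + |(k : ℝ)|) ^ ε) ∧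
    ∑' k : ℤ, ‖c k‖ * (1 + |(k : ℝ)|) ^ ε ≤ M

variable {ε M : ℝ} {g : ℝ → ℂ}

lemma BeurlingNormLE.comp_sub_const (hg : BeurlingNormLE ε g M) (α : ℝ) :
    BeurlingNormLE ε (fun x ↦ g (x - α)) M := by
  obtain ⟨c, hc, hsum, hM⟩ := hg
  have hnorm (k : ℤ) : ‖c k * 𝐞 (-(k * α))‖ = ‖c k‖ := by
    rw [norm_mul, Circle.norm_coe, mul_one]
  refine ⟨fun k ↦ c k * 𝐞 (-(k * α)), fun x ↦ ?_, by simpa only [hnorm], by simpa only [hnorm]⟩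
  convert hc (x - α) using 2 with k
  rw [mul_assoc, ← coe_fourierChar_add]
  ring_nf

lemma BeurlingNormLE.fourierChar_mul (hg : BeurlingNormLE ε g M) (hε : 0 ≤ ε) (h : ℤ) :
    BeurlingNormLE ε (fun x ↦ 𝐞 (h * x) * g x) ((1 + |(h : ℝ)|) ^ ε * M) := by
  obtain ⟨c, hc, hsum, hM⟩ := hg
  have hle (k : ℤ) : ‖c k‖ * (1 + |((k + h : ℤ) : ℝ)|) ^ ε ≤
      (1 + |(h : ℝ)|) ^ ε * (‖c k‖ * (1 + |(k : ℝ)|) ^ ε) := by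
    rw [mul_left_comm, ← mul_rpow (by positivity) (by positivity)]
    gcongr
    push_cast
    nlinarith [abs_add_le (k : ℝ) h, mul_nonneg (abs_nonneg (h : ℝ)) (abs_nonneg (k : ℝ))]
  have hsum_shift := (hsum.mul_left _).of_nonneg_of_le (fun k ↦ by positivity) hle
  refine ⟨fun k ↦ c (k - h), fun x ↦ ?_, ?_, ?_⟩
  · rw [← (Equiv.addRight h).hasSum_iff]
    refine ((hc x).mul_left (𝐞 (h * x) : ℂ)).congr_fun fun k ↦ ?_
    simp only [Function.comp_apply, Equiv.coe_addRight, add_sub_cancel_right, Int.cast_add,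
      add_mul, coe_fourierChar_add]
    ring
  · rw [← (Equiv.addRight h).summable_iff]
    simpa [Function.comp_def] using hsum_shift
  · rw [← (Equiv.addRight h).tsum_eq]
    simp only [Equiv.coe_addRight, add_sub_cancel_right]
    calc _ ≤ ∑' k : ℤ, (1 + |(h : ℝ)|) ^ ε * (‖c k‖ * (1 + |(k : ℝ)|) ^ ε) :=
          hsum_shift.tsum_le_tsum hle (hsum.mul_left _)
      _ ≤ _ := by
          rw [tsum_mul_left]
          gcongr

variable {α ι : Type*} {s : Finset α}

lemma BeurlingNormLE.norm_sum_mul_le (hg : BeurlingNormLE ε g M) {a : α → ℂ} {x : α → ℝ} {B : ℝ}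
    (hB : ∀ k : ℤ, ‖∑ n ∈ s, a n * 𝐞 (k * x n)‖ ≤ B * (1 + |(k : ℝ)|) ^ ε) :
    ‖∑ n ∈ s, a n * g (x n)‖ ≤ B * M := by
  obtain ⟨c, hc, hsum, hM⟩ := hg
  have hB0 : 0 ≤ B := by simpa using (norm_nonneg _).trans (hB 0)
  have hexpand : HasSum (fun k : ℤ ↦ ∑ n ∈ s, a n * (c k * 𝐞 (k * x n)))
      (∑ n ∈ s, a n * g (x n)) := hasSum_sum fun n _ ↦ (hc (x n)).mul_left (a n)
  have hterm (k : ℤ) : ‖∑ n ∈ s, a n * (c k * 𝐞 (k * x n))‖ ≤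
      B * (‖c k‖ * (1 + |(k : ℝ)|) ^ ε) := by
    simp only [mul_left_comm (a _), ← Finset.mul_sum, norm_mul]
    rw [mul_left_comm]
    exact mul_le_mul_of_nonneg_left (hB k) (norm_nonneg _)
  calc ‖∑ n ∈ s, a n * g (x n)‖
      ≤ ∑' k : ℤ, B * (‖c k‖ * (1 + |(k : ℝ)|) ^ ε) := by
        rw [← hexpand.tsum_eq]
        exact tsum_of_norm_bounded (hsum.mul_left B).hasSum hterm
    _ ≤ B * M := by
        rw [tsum_mul_left]
        exact mul_le_mul_of_nonneg_left hM hB0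

lemma norm_sum_mul_prod_le_of_beurlingNormLE {J : Finset ι} {g : ι → ℝ → ℂ} {M : ι → ℝ}
    (hg : ∀ l ∈ J, BeurlingNormLE ε (g l) (M l)) {a : α → ℂ} {x : α → ι → ℝ} {B : ℝ}
    (hB : ∀ k : ι → ℤ, ‖∑ n ∈ s, a n * 𝐞 (∑ l ∈ J, k l * x n l)‖ ≤
      B * ∏ l ∈ J, (1 + |(k l : ℝ)|) ^ ε) :
    ‖∑ n ∈ s, a n * ∏ l ∈ J, g l (x n l)‖ ≤ B * ∏ l ∈ J, M l := by
  classical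
  induction J using Finset.induction_on generalizing a B with
  | empty => simpa using hB 0
  | insert j J hj ih =>
    have hupdate (k : ι → ℤ) (m : ℤ) {l : ι} (hl : l ∈ J) : Function.update k j m l = k l :=
      Function.update_of_ne (ne_of_mem_of_not_mem hl hj) _ _
    have hchar (m : ℤ) : ‖∑ n ∈ s, a n * 𝐞 (m * x n j) * ∏ l ∈ J, g l (x n l)‖ ≤
        B * (1 + |(m : ℝ)|) ^ ε * ∏ l ∈ J, M l := by
      refine ih (fun l hl ↦ hg l (mem_insert_of_mem hl)) fun k ↦ ?_
      have h := hB (Function.update k j m)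
      simp only [sum_insert hj, prod_insert hj, Function.update_self, coe_fourierChar_add,
        ← mul_assoc] at h
      rwa [prod_congr rfl fun l hl ↦ by rw [hupdate k m hl],
        sum_congr rfl fun n _ ↦ by rw [sum_congr rfl fun l hl ↦ by rw [hupdate k m hl]]] at h
    have h := (hg j (mem_insert_self j J)).norm_sum_mul_le (s := s) (x := (x · j))
      (a := fun n ↦ a n * ∏ l ∈ J, g l (x n l)) (B := B * ∏ l ∈ J, M l) fun m ↦ by
        simpa only [mul_right_comm] using hchar m
    simpa only [prod_insert hj, mul_assoc, mul_comm, mul_left_comm] using h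

end Beurling

section Bump

/-- The parabolic bump on `[0, 1]`, the weight used to localise points away from the jump of the
fractional part: vanishing at both endpoints makes the periodisation of `parabola y * 𝐞 (θ * y)`
continuous for every real frequency `θ`. -/
def parabola (y : ℝ) : ℝ := y * (1 - y)

lemma parabola_nonneg {y : ℝ} (h0 : 0 ≤ y) (h1 : y ≤ 1) : 0 ≤ parabola y :=
  mul_nonneg h0 (sub_nonneg.mpr h1)

lemma parabola_le_one (y : ℝ) : parabola y ≤ 1 := by
  unfold parabola
  nlinarith [sq_nonneg (y - 1 / 2)]

lemma le_parabola {y : ℝ} (hy : |y - 1 / 2| ≤ 1 / 4) : 3 / 16 ≤ parabola y := by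
  unfold parabola
  nlinarith [sq_abs (y - 1 / 2), abs_nonneg (y - 1 / 2)]

lemma pow_le_prod_parabola {ι : Type*} {J : Finset ι} {z : ι → ℝ}
    (hz : ∀ l ∈ J, |z l - 1 / 2| ≤ 1 / 4) :
    (3 / 16) ^ #J ≤ ∏ l ∈ J, parabola (z l) := by
  rw [← prod_const]
  exact prod_le_prod (fun _ _ ↦ by norm_num) fun l hl ↦ le_parabola (hz l hl)

lemma continuous_fourierChar_mul (u : ℝ) : Continuous fun y : ℝ ↦ (𝐞 (u * y) : ℂ) :=
  (continuous_subtype_val.comp continuous_fourierChar).comp (continuous_const_mul u)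

lemma continuous_parabola_mul_fourierChar (u : ℝ) :
    Continuous fun y ↦ (parabola y : ℂ) * 𝐞 (u * y) := by
  have := continuous_fourierChar_mul u
  unfold parabola
  fun_prop

lemma hasDerivAt_fourierChar_mul (u y : ℝ) :
    HasDerivAt (fun y : ℝ ↦ (𝐞 (u * y) : ℂ)) (2 * π * Complex.I * u * 𝐞 (u * y)) y := by
  have h := (hasDerivAt_fourierChar (u * y)).scomp y ((hasDerivAt_id y).const_mul u)
  refine h.congr_deriv ?_
  rw [mul_one, Complex.real_smul]
  ring

lemma integral_parabola_mul_fourierChar {u : ℝ} (hu : u ≠ 0) :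
    ∫ y in (0 : ℝ)..1, (parabola y : ℂ) * 𝐞 (u * y) =
      (1 + 𝐞 u - 2 * ∫ y in (0 : ℝ)..1, (𝐞 (u * y) : ℂ)) / (2 * π * Complex.I * u) ^ 2 := by
  let a : ℂ := 2 * π * Complex.I * u
  have ha : a ≠ 0 := by simp [a, hu, pi_ne_zero]
  -- Two integrations by parts give the primitive; the boundary terms in `1 / a` vanish.
  let H : ℝ → ℂ := fun y ↦ ((parabola y : ℂ) / a - (1 - 2 * y) / a ^ 2) * 𝐞 (u * y)
  have hparabola (y : ℝ) : HasDerivAt (fun y : ℝ ↦ (parabola y : ℂ)) (1 - 2 * y) y := by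
    have h := (hasDerivAt_id y).mul ((hasDerivAt_id y).const_sub 1)
    exact h.ofReal_comp.congr_deriv (by push_cast [id]; ring)
  have hlinear (y : ℝ) : HasDerivAt (fun y : ℝ ↦ (1 - 2 * y : ℂ)) (-2) y := by
    have h := ((hasDerivAt_id (y : ℂ)).const_mul 2).const_sub 1
    exact h.comp_ofReal.congr_deriv (by ring)
  have hchar (y : ℝ) : HasDerivAt (fun y : ℝ ↦ (𝐞 (u * y) : ℂ)) (a * 𝐞 (u * y)) y :=
    hasDerivAt_fourierChar_mul u y
  have hH (y : ℝ) : HasDerivAt H ((parabola y : ℂ) * 𝐞 (u * y) + 2 / a ^ 2 * 𝐞 (u * y)) y := by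
    refine ((((hparabola y).div_const a).sub ((hlinear y).div_const (a ^ 2))).mul
      (hchar y)).congr_deriv ?_
    simp only [Pi.sub_apply]
    field_simp
    ring
  have hbump := (continuous_parabola_mul_fourierChar u).intervalIntegrable
    (μ := MeasureTheory.volume) 0 1
  have hchar_int := ((continuous_fourierChar_mul u).const_mul (2 / a ^ 2)).intervalIntegrable
    (μ := MeasureTheory.volume) 0 1
  have hFTC := intervalIntegral.integral_eq_sub_of_hasDerivAt (fun y _ ↦ hH y) (hbump.add hchar_int)
  rw [intervalIntegral.integral_add hbump hchar_int, intervalIntegral.integral_const_mul,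
    ← eq_sub_iff_add_eq] at hFTC
  rw [hFTC]
  simp only [H, parabola, Complex.ofReal_zero, Complex.ofReal_one, mul_zero, mul_one,
    sub_self, sub_zero, zero_div, AddChar.map_zero_eq_one, Circle.coe_one]
  ring

lemma norm_integral_parabola_mul_fourierChar_le (u : ℝ) :
    ‖∫ y in (0 : ℝ)..1, (parabola y : ℂ) * 𝐞 (u * y)‖ ≤ 2 / (1 + u ^ 2) := by
  have hone : ‖∫ y in (0 : ℝ)..1, (parabola y : ℂ) * 𝐞 (u * y)‖ ≤ 1 := by
    refine (intervalIntegral.norm_integral_le_of_norm_le_const (C := 1) fun y hy ↦ ?_).trans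
      (by simp)
    rw [Set.uIoc_of_le zero_le_one] at hy
    rw [norm_mul, Circle.norm_coe, mul_one, Complex.norm_real, norm_eq_abs,
      abs_of_nonneg (parabola_nonneg hy.1.le hy.2)]
    exact parabola_le_one y
  have hsq : u ^ 2 * ‖∫ y in (0 : ℝ)..1, (parabola y : ℂ) * 𝐞 (u * y)‖ ≤ 1 := by
    rcases eq_or_ne u 0 with rfl | hu
    · simp
    have hchar : ‖∫ y in (0 : ℝ)..1, (𝐞 (u * y) : ℂ)‖ ≤ 1 := by
      simpa using intervalIntegral.norm_integral_le_of_norm_le_const (a := (0 : ℝ)) (b := 1)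
        fun y _ ↦ (Circle.norm_coe (𝐞 (u * y))).le
    have hnum : ‖1 + (𝐞 u : ℂ) - 2 * ∫ y in (0 : ℝ)..1, (𝐞 (u * y) : ℂ)‖ ≤ 4 := by
      refine (norm_sub_le _ _).trans ?_
      rw [norm_mul, Complex.norm_ofNat]
      linarith [(norm_add_le 1 (𝐞 u : ℂ)).trans_eq (by rw [norm_one, Circle.norm_coe])]
    have hpi : 1 ≤ π ^ 2 := one_le_pow₀ (by linarith [pi_gt_three])
    have hden : ‖(2 * π * Complex.I * u : ℂ) ^ 2‖ = 4 * π ^ 2 * u ^ 2 := by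
      norm_num [mul_pow]
    rw [integral_parabola_mul_fourierChar hu, norm_div, hden, mul_div_assoc',
      div_le_one (by positivity)]
    calc u ^ 2 * ‖1 + (𝐞 u : ℂ) - 2 * ∫ y in (0 : ℝ)..1, (𝐞 (u * y) : ℂ)‖ ≤ u ^ 2 * 4 := by gcongr
      _ ≤ 4 * π ^ 2 * u ^ 2 := by nlinarith [sq_nonneg u]
  rw [le_div_iff₀ (by positivity)]
  linarith

lemma summable_one_add_abs_int_rpow {b : ℝ} (hb : b < -1) :
    Summable fun k : ℤ ↦ (1 + |(k : ℝ)|) ^ b := by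
  have h : Summable fun n : ℕ ↦ (1 + (n : ℝ)) ^ b := by
    simpa [add_comm] using (summable_nat_add_iff 1).mpr (summable_nat_rpow.mpr hb)
  apply Summable.of_nat_of_neg <;> simpa using h

/-- A bound for the Beurling norm of weight `(1 + |k|) ^ ε` of the periodised bumps
`parabola y * 𝐞 (θ * y)`, uniform in `θ ∈ [0, 1)`. -/
noncomputable def bumpConst (ε : ℝ) : ℝ := 16 * ∑' k : ℤ, (1 + |(k : ℝ)|) ^ (ε - 2)

lemma bumpConst_nonneg (ε : ℝ) : 0 ≤ bumpConst ε :=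
  mul_nonneg (by norm_num) (tsum_nonneg fun k ↦ by positivity)

lemma norm_integral_parabola_mul_fourierChar_sub_int_le {θ : ℝ} (h0 : 0 ≤ θ) (h1 : θ ≤ 1)
    (k : ℤ) :
    ‖∫ y in (0 : ℝ)..1, (parabola y : ℂ) * 𝐞 ((θ - k) * y)‖ ≤ 16 * (1 + |(k : ℝ)|) ^ (-2 : ℝ) := by
  have hk : |(k : ℝ)| ≤ |θ - k| + 1 := by
    have := abs_sub_abs_le_abs_sub (k : ℝ) θ
    rw [abs_sub_comm, abs_of_nonneg h0] at this
    linarith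
  refine (norm_integral_parabola_mul_fourierChar_le _).trans ?_
  rw [rpow_neg (by positivity), rpow_two, ← div_eq_mul_inv,
    div_le_div_iff₀ (by positivity) (by positivity)]
  nlinarith [sq_abs (θ - k), sq_nonneg (|θ - k| - 1), abs_nonneg (k : ℝ)]

variable {ε : ℝ}

lemma beurlingNormLE_parabola_fract_of_mem_Icc (hε : ε < 1) {θ : ℝ} (h0 : 0 ≤ θ) (h1 : θ ≤ 1) :
    BeurlingNormLE ε (fun x ↦ (parabola (Int.fract x) : ℂ) * 𝐞 (θ * Int.fract x))
      (bumpConst ε) := by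
  let c : ℤ → ℂ := fun k ↦ ∫ y in (0 : ℝ)..1, (parabola y : ℂ) * 𝐞 ((θ - k) * y)
  have hc (k : ℤ) : c k = ∫ y in (0 : ℝ)..1, (parabola y : ℂ) * 𝐞 (θ * y) * 𝐞 (-(k * y)) := by
    refine intervalIntegral.integral_congr fun y _ ↦ ?_
    simp only [mul_assoc, ← coe_fourierChar_add]
    ring_nf
  have hdecay := norm_integral_parabola_mul_fourierChar_sub_int_le h0 h1
  have hle (k : ℤ) : ‖c k‖ * (1 + |(k : ℝ)|) ^ ε ≤ 16 * (1 + |(k : ℝ)|) ^ (ε - 2) := by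
    rw [sub_eq_neg_add, rpow_add (by positivity), ← mul_assoc]
    exact mul_le_mul_of_nonneg_right (hdecay k) (by positivity)
  have hweight := (summable_one_add_abs_int_rpow (b := ε - 2) (by linarith)).mul_left 16
  have hsum := hweight.of_nonneg_of_le (fun k ↦ by positivity) hle
  have hc_summable : Summable c :=
    .of_norm_bounded ((summable_one_add_abs_int_rpow (by norm_num)).mul_left 16) hdecay
  refine ⟨c, fun x ↦ ?_, hsum, (hsum.tsum_le_tsum hle hweight).trans_eq tsum_mul_left⟩
  simp only [hc] at hc_summable ⊢
  exact hasSum_fourierChar_fract (continuous_parabola_mul_fourierChar θ).continuousOn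
    (by simp [parabola]) (by simpa only [← hc]) x

lemma beurlingNormLE_parabola_fract (hε : 0 ≤ ε) (hε1 : ε < 1) (θ : ℝ) :
    BeurlingNormLE ε (fun x ↦ (parabola (Int.fract x) : ℂ) * 𝐞 (θ * Int.fract x))
      ((1 + |(⌊θ⌋ : ℝ)|) ^ ε * bumpConst ε) := by
  convert (beurlingNormLE_parabola_fract_of_mem_Icc hε1 (Int.fract_nonneg θ)
    (Int.fract_lt_one θ).le).fourierChar_mul hε ⌊θ⌋ using 2 with x
  rw [mul_left_comm, ← fourierChar_intCast_mul_fract, ← coe_fourierChar_add, ← add_mul,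
    Int.floor_add_fract]

end Bump

section FejerKernel

lemma norm_sum_range_fourierChar_sq (K : ℕ) (x : ℝ) :
    ((‖∑ j ∈ range K, (𝐞 (j * x) : ℂ)‖ ^ 2 : ℝ) : ℂ) =
      ∑ a ∈ range K, ∑ b ∈ range K, (𝐞 (((a - b : ℤ) : ℝ) * x) : ℂ) := by
  push_cast
  rw [← Complex.mul_conj', map_sum, sum_mul_sum]
  refine sum_congr rfl fun a _ ↦ sum_congr rfl fun b _ ↦ ?_
  rw [← Circle.coe_inv_eq_conj, ← AddChar.map_neg_eq_inv, ← coe_fourierChar_add]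
  ring_nf

variable {α : Type*} {s A : Finset α} {W φ : α → ℝ} {K : ℕ} {M : ℝ}

lemma sum_mul_norm_sum_range_fourierChar_sq_le (hW : ∀ n ∈ s, 0 ≤ W n) (hM : 0 ≤ M)
    (h : ∀ m : ℤ, m ≠ 0 → |m| < K → ‖∑ n ∈ s, (W n : ℂ) * 𝐞 (m * φ n)‖ ≤ M) :
    ∑ n ∈ s, W n * ‖∑ j ∈ range K, (𝐞 (j * φ n) : ℂ)‖ ^ 2 ≤ K * (∑ n ∈ s, W n + K * M) := by
  have hexpand : ((∑ n ∈ s, W n * ‖∑ j ∈ range K, (𝐞 (j * φ n) : ℂ)‖ ^ 2 : ℝ) : ℂ) =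
      ∑ a ∈ range K, ∑ b ∈ range K, ∑ n ∈ s, (W n : ℂ) * 𝐞 (((a - b : ℤ) : ℝ) * φ n) := by
    simp only [Complex.ofReal_sum, Complex.ofReal_mul, norm_sum_range_fourierChar_sq,
      Finset.mul_sum]
    rw [sum_comm]
    exact sum_congr rfl fun a _ ↦ sum_comm
  have hterm : ∀ a ∈ range K, ∀ b ∈ range K,
      ‖∑ n ∈ s, (W n : ℂ) * 𝐞 (((a - b : ℤ) : ℝ) * φ n)‖ ≤
        (if a = b then ∑ n ∈ s, W n else 0) + M := by
    intro a ha b hb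
    rw [mem_range] at ha hb
    split_ifs with hab
    · have hdiag : ‖∑ n ∈ s, (W n : ℂ) * 𝐞 (((a - b : ℤ) : ℝ) * φ n)‖ = ∑ n ∈ s, W n := by
        simp only [hab, sub_self, Int.cast_zero, zero_mul, AddChar.map_zero_eq_one, Circle.coe_one,
          mul_one]
        rw [← Complex.ofReal_sum, Complex.norm_of_nonneg (sum_nonneg hW)]
      linarith
    · rw [zero_add]
      exact h _ (by lia) (by rw [abs_lt]; lia)
  calc ∑ n ∈ s, W n * ‖∑ j ∈ range K, (𝐞 (j * φ n) : ℂ)‖ ^ 2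
      ≤ ‖((∑ n ∈ s, W n * ‖∑ j ∈ range K, (𝐞 (j * φ n) : ℂ)‖ ^ 2 : ℝ) : ℂ)‖ := by
        rw [Complex.norm_real]
        exact le_norm_self _
    _ ≤ ∑ a ∈ range K, ∑ b ∈ range K, ((if a = b then ∑ n ∈ s, W n else 0) + M) := by
        rw [hexpand]
        exact norm_sum_le_of_le _ fun a ha ↦ norm_sum_le_of_le _ (hterm a ha)
    _ = K * (∑ n ∈ s, W n + K * M) := by
        simp only [sum_add_distrib, sum_ite_eq, sum_ite_mem, inter_self, sum_const, card_range,
          nsmul_eq_mul]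
        ring

lemma mul_card_le_of_norm_sum_fourierChar_le (hA : A ⊆ s) {s₀ δ : ℝ} (hK : 0 < K)
    (hW : ∀ n ∈ s, 0 ≤ W n) (hWA : ∀ n ∈ A, δ ≤ W n) (hφ : ∀ n ∈ A, φ n = s₀) (hM : 0 ≤ M)
    (h : ∀ m : ℤ, m ≠ 0 → |m| < K → ‖∑ n ∈ s, (W n : ℂ) * 𝐞 (m * φ n)‖ ≤ M) :
    δ * #A ≤ (∑ n ∈ s, W n) / K + M := by
  have hK' : (0 : ℝ) < K := by exact_mod_cast hK
  have hshift (m : ℤ) : ‖∑ n ∈ s, (W n : ℂ) * 𝐞 (m * (φ n - s₀))‖ =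
      ‖∑ n ∈ s, (W n : ℂ) * 𝐞 (m * φ n)‖ := by
    simp only [sub_eq_add_neg, mul_add, coe_fourierChar_add, ← mul_assoc]
    rw [← Finset.sum_mul, norm_mul, Circle.norm_coe, mul_one]
  have hupper := sum_mul_norm_sum_range_fourierChar_sq_le (φ := fun n ↦ φ n - s₀) hW hM
    fun m hm hmK ↦ (hshift m).trans_le (h m hm hmK)
  have hlower : δ * #A * K ^ 2 ≤
      ∑ n ∈ s, W n * ‖∑ j ∈ range K, (𝐞 (j * (φ n - s₀)) : ℂ)‖ ^ 2 := by
    calc δ * #A * K ^ 2 = ∑ n ∈ A, δ * K ^ 2 := by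
          rw [sum_const, nsmul_eq_mul]
          ring
      _ ≤ ∑ n ∈ A, W n * ‖∑ j ∈ range K, (𝐞 (j * (φ n - s₀)) : ℂ)‖ ^ 2 := by
          refine sum_le_sum fun n hn ↦ ?_
          simp only [hφ n hn, sub_self, mul_zero, AddChar.map_zero_eq_one, Circle.coe_one,
            sum_const, card_range, nsmul_eq_mul, mul_one, Complex.norm_natCast]
          exact mul_le_mul_of_nonneg_right (hWA n hn) (by positivity)
      _ ≤ _ := sum_le_sum_of_subset_of_nonneg hA fun n hn _ ↦
          mul_nonneg (hW n hn) (by positivity)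
  refine le_of_mul_le_mul_right ?_ (pow_pos hK' 2)
  calc δ * #A * K ^ 2 ≤ K * (∑ n ∈ s, W n + K * M) := hlower.trans hupper
    _ = ((∑ n ∈ s, W n) / K + M) * K ^ 2 := by field_simp

end FejerKernel

section Box

variable {α ι : Type*} [Fintype ι] {s A : Finset α} {x : α → ι → ℝ} {ε B : ℝ}

lemma norm_sum_fourierChar_mul_prod_parabola_le [DecidableEq ι] (hε : 0 ≤ ε) (hε1 : ε < 1)
    (hB : ∀ k : ι → ℤ, k ≠ 0 →
      ‖∑ n ∈ s, (𝐞 (∑ l, k l * x n l) : ℂ)‖ ≤ B * ∏ l, (1 + |(k l : ℝ)|) ^ ε)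
    (β θ : ι → ℝ) (i : ι) {m : ℤ} (hm : m ≠ 0) :
    ‖∑ n ∈ s, (𝐞 (m * x n i) : ℂ) * ∏ l ∈ univ.erase i,
        ((parabola (Int.fract (x n l - β l)) : ℂ) * 𝐞 (θ l * Int.fract (x n l - β l)))‖ ≤
      B * (1 + |(m : ℝ)|) ^ ε * ∏ l ∈ univ.erase i, ((1 + |(⌊θ l⌋ : ℝ)|) ^ ε * bumpConst ε) := by
  refine norm_sum_mul_prod_le_of_beurlingNormLE
    (fun l _ ↦ (beurlingNormLE_parabola_fract hε hε1 (θ l)).comp_sub_const (β l)) fun k ↦ ?_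
  have hk : Function.update k i m ≠ 0 := fun h ↦ hm (by simpa using congrFun h i)
  have hupdate {l : ι} (hl : l ∈ univ.erase i) : Function.update k i m l = k l :=
    Function.update_of_ne (ne_of_mem_erase hl) _ _
  have h := hB _ hk
  simp only [← add_sum_erase univ _ (mem_univ i), ← mul_prod_erase univ _ (mem_univ i),
    Function.update_self, coe_fourierChar_add, ← mul_assoc] at h
  rwa [prod_congr rfl fun l hl ↦ by rw [hupdate hl],
    sum_congr rfl fun n _ ↦ by rw [sum_congr rfl fun l hl ↦ by rw [hupdate hl]]] at h

lemma norm_sum_prod_parabola_mul_fourierChar_le [DecidableEq ι] (hε : 0 ≤ ε) (hε1 : ε < 1)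
    (hB : ∀ k : ι → ℤ, k ≠ 0 →
      ‖∑ n ∈ s, (𝐞 (∑ l, k l * x n l) : ℂ)‖ ≤ B * ∏ l, (1 + |(k l : ℝ)|) ^ ε)
    (hB0 : 0 ≤ B) (β : ι → ℝ) {r : ι → ℝ} (hr : ∀ l, |r l| ≤ 1) (i : ι) {m : ℤ} (hm : m ≠ 0)
    {K : ℕ} (hmK : |m| < K) :
    ‖∑ n ∈ s, ((∏ l ∈ univ.erase i, parabola (Int.fract (x n l - β l)) : ℝ) : ℂ) *
        𝐞 (m * (x n i + ∑ l ∈ univ.erase i, r l * Int.fract (x n l - β l)))‖ ≤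
      B * (K : ℝ) ^ ε * ((K : ℝ) ^ ε * bumpConst ε) ^ (Fintype.card ι - 1) := by
  have hmK' : 1 + |(m : ℝ)| ≤ K := by
    have : 1 + |m| ≤ K := by lia
    exact_mod_cast this
  have hfloor (l : ι) : 1 + |(⌊m * r l⌋ : ℝ)| ≤ K := by
    have hmr : |m * r l| ≤ |(m : ℝ)| := by
      rw [abs_mul]
      exact mul_le_of_le_one_right (abs_nonneg _) (hr l)
    have hle : |⌊m * r l⌋| ≤ |m| := by
      rw [abs_le, Int.le_floor, ← Int.cast_le (R := ℝ)]
      push_cast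
      exact ⟨(abs_le.mp hmr).1, (Int.floor_le _).trans (abs_le.mp hmr).2⟩
    have : (|⌊m * r l⌋| : ℝ) ≤ |(m : ℝ)| := by exact_mod_cast hle
    linarith
  calc _ = ‖∑ n ∈ s, (𝐞 (m * x n i) : ℂ) * ∏ l ∈ univ.erase i,
        ((parabola (Int.fract (x n l - β l)) : ℂ) * 𝐞 (m * r l * Int.fract (x n l - β l)))‖ := by
        congr 1
        refine sum_congr rfl fun n _ ↦ ?_
        simp only [mul_add, Finset.mul_sum, coe_fourierChar_add, coe_fourierChar_sum,
          prod_mul_distrib, Complex.ofReal_prod, mul_assoc, mul_left_comm]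
    _ ≤ B * (1 + |(m : ℝ)|) ^ ε *
        ∏ l ∈ univ.erase i, ((1 + |(⌊m * r l⌋ : ℝ)|) ^ ε * bumpConst ε) :=
        norm_sum_fourierChar_mul_prod_parabola_le hε hε1 hB β (fun l ↦ m * r l) i hm
    _ ≤ B * (K : ℝ) ^ ε * ∏ _l ∈ univ.erase i, ((K : ℝ) ^ ε * bumpConst ε) := by
        have := bumpConst_nonneg ε
        gcongr with l
        exact hfloor l
    _ = _ := by rw [prod_const, card_erase_of_mem (mem_univ i), card_univ]

lemma add_sum_div_mul_sub_eq [DecidableEq ι] {i : ι} {y : ι → ℝ} (hyi : y i ≠ 0) (x β : ι → ℝ) :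
    x i + ∑ l ∈ univ.erase i, y l / y i * (x l - β l) =
      (∑ l, x l * y l) / y i - ∑ l ∈ univ.erase i, y l / y i * β l := by
  rw [← add_sum_erase _ _ (mem_univ i), add_div, mul_div_cancel_right₀ _ hyi, Finset.sum_div,
    add_sub_assoc, ← sum_sub_distrib]
  refine congrArg _ (sum_congr rfl fun l _ ↦ ?_)
  ring

lemma card_le_of_sum_mul_eq_of_abs_sub_le (hε : 0 ≤ ε) (hε1 : ε < 1)
    (hB : ∀ k : ι → ℤ, k ≠ 0 →
      ‖∑ n ∈ s, (𝐞 (∑ l, k l * x n l) : ℂ)‖ ≤ B * ∏ l, (1 + |(k l : ℝ)|) ^ ε)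
    (hB0 : 0 ≤ B) {i : ι} {y : ι → ℝ} (hyi : y i ≠ 0) (hy : ∀ l, |y l| ≤ |y i|) {t : ℝ}
    {c : ι → ℝ} (hA : A ⊆ s) (hAt : ∀ n ∈ A, ∑ l, x n l * y l = t)
    (hAc : ∀ n ∈ A, ∀ l, |x n l - c l| ≤ 1 / 4) {K : ℕ} (hK : 0 < K) :
    (3 / 16) ^ (Fintype.card ι - 1) * (#A : ℝ) ≤
      #s / K + B * (K : ℝ) ^ ε * ((K : ℝ) ^ ε * bumpConst ε) ^ (Fintype.card ι - 1) := by
  classical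
  let β : ι → ℝ := fun l ↦ c l - 1 / 2
  let z : α → ι → ℝ := fun n l ↦ Int.fract (x n l - β l)
  let W : α → ℝ := fun n ↦ ∏ l ∈ univ.erase i, parabola (z n l)
  have hr (l : ι) : |y l / y i| ≤ 1 := by
    rw [abs_div]
    exact div_le_one_of_le₀ (hy l) (abs_nonneg _)
  have hparabola (n : α) (l : ι) : 0 ≤ parabola (z n l) :=
    parabola_nonneg (Int.fract_nonneg _) (Int.fract_lt_one _).le
  have hz {n : α} (hn : n ∈ A) (l : ι) : z n l = x n l - β l := by
    have := abs_le.mp (hAc n hn l)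
    refine Int.fract_eq_self.mpr ⟨?_, ?_⟩ <;> simp only [β] <;> linarith
  have hWA : ∀ n ∈ A, (3 / 16) ^ (Fintype.card ι - 1) ≤ W n := by
    intro n hn
    rw [← card_univ, ← card_erase_of_mem (mem_univ i)]
    refine pow_le_prod_parabola fun l _ ↦ ?_
    rw [hz hn, sub_sub, sub_add_cancel]
    exact hAc n hn l
  have hphase : ∀ n ∈ A, x n i + ∑ l ∈ univ.erase i, y l / y i * z n l =
      t / y i - ∑ l ∈ univ.erase i, y l / y i * β l := by
    intro n hn
    simp only [hz hn, ← hAt n hn]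
    exact add_sum_div_mul_sub_eq hyi (x n) β
  have hWs : ∑ n ∈ s, W n ≤ #s := by
    simpa using sum_le_card_nsmul s W 1 fun n _ ↦
      prod_le_one (fun l _ ↦ hparabola n l) fun l _ ↦ parabola_le_one _
  refine (mul_card_le_of_norm_sum_fourierChar_le hA hK
    (fun n _ ↦ prod_nonneg fun l _ ↦ hparabola n l) hWA hphase ?_ fun m hm hmK ↦
      norm_sum_prod_parabola_mul_fourierChar_le hε hε1 hB hB0 _ hr i hm hmK).trans (by gcongr)
  have := bumpConst_nonneg ε
  positivity

end Box

lemma one_add_sum_le_prod_one_add {ι : Type*} (s : Finset ι) {f : ι → ℝ} (hf : ∀ l ∈ s, 0 ≤ f l) :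
    1 + ∑ l ∈ s, f l ≤ ∏ l ∈ s, (1 + f l) := by
  classical
  induction s using Finset.induction_on with
  | empty => simp
  | insert j s hj ih =>
    rw [sum_insert hj, prod_insert hj]
    have hj0 := hf j (mem_insert_self j s)
    have hs := fun l hl ↦ hf l (mem_insert_of_mem hl)
    nlinarith [mul_le_mul_of_nonneg_left (ih hs) hj0, mul_nonneg hj0 (sum_nonneg hs), ih hs]

lemma intNorm_le_prod_one_add_abs {d : ℕ} (k : Fin d → ℤ) :
    intNorm k ≤ ∏ l, (1 + |(k l : ℝ)|) := by
  refine sqrt_le_iff.mpr ⟨by positivity, ?_⟩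
  calc ∑ l, (k l : ℝ) ^ 2 ≤ ∏ l, (1 + (k l : ℝ) ^ 2) := by
        linarith [one_add_sum_le_prod_one_add univ fun l _ ↦ sq_nonneg (k l : ℝ)]
    _ ≤ ∏ l, (1 + |(k l : ℝ)|) ^ 2 := by
        gcongr with l
        nlinarith [sq_abs (k l : ℝ), abs_nonneg (k l : ℝ)]
    _ = (∏ l, (1 + |(k l : ℝ)|)) ^ 2 := prod_pow _ _ _

variable {d : ℕ} {γ ε : ℝ} {v : ℕ → Fin d → ℝ}

lemma IsGammaUD.exists_norm_sum_fourierChar_le (hv : IsGammaUD γ v) (hε : 0 < ε) :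
    ∃ C : ℝ, 0 < C ∧ ∀ N : ℕ, 1 ≤ N → ∀ k : Fin d → ℤ, k ≠ 0 →
      ‖∑ n ∈ range N, (𝐞 (∑ l, k l * v n l) : ℂ)‖ ≤
        C * (N : ℝ) ^ (1 - γ) * ∏ l, (1 + |(k l : ℝ)|) ^ ε := by
  obtain ⟨C, hC, h⟩ := hv ε hε
  refine ⟨C, hC, fun N hN k hk ↦ ?_⟩
  have hN' : (0 : ℝ) < N := by exact_mod_cast hN
  have hmean := h k hk N hN
  rw [norm_mul, norm_inv, Complex.norm_natCast, inv_mul_le_iff₀ hN'] at hmean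
  calc ‖∑ n ∈ range N, (𝐞 (∑ l, k l * v n l) : ℂ)‖
      ≤ N * (C * intNorm k ^ ε * (N : ℝ) ^ (-γ)) := by
        refine (congrArg norm (sum_congr rfl fun n _ ↦ ?_)).trans_le hmean
        rw [fourierChar_apply]
        push_cast
        ring_nf
    _ = C * (N : ℝ) ^ (1 - γ) * intNorm k ^ ε := by
        rw [sub_eq_add_neg, rpow_add hN', rpow_one]
        ring
    _ ≤ C * (N : ℝ) ^ (1 - γ) * ∏ l, (1 + |(k l : ℝ)|) ^ ε := by
        rw [finsetProd_rpow _ _ fun _ _ ↦ by positivity]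
        gcongr
        · exact sqrt_nonneg _
        · exact intNorm_le_prod_one_add_abs k

lemma IsGammaUD.exists_card_le_of_abs_sub_le (hUD : IsGammaUD γ v) (hγ : γ ≤ 1) (hε : 0 < ε) :
    ∃ C : ℝ, 0 < C ∧ ∀ N : ℕ, 1 ≤ N → ∀ y : Fin d → ℝ, y ≠ 0 → ∀ (t : ℝ) (c : Fin d → ℝ),
      ∀ A ⊆ range N, (∀ n ∈ A, dotP (v n) y = t) → (∀ n ∈ A, ∀ l, |v n l - c l| ≤ 1 / 4) →
        (#A : ℝ) ≤ C * (N : ℝ) ^ (1 - γ + ε) := by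
  let η : ℝ := min (1 / 2) (ε / (d + 1))
  have hη : 0 < η := lt_min (by norm_num) (by positivity)
  have hη1 : η < 1 := (min_le_left _ _).trans_lt (by norm_num)
  have hdη : η * d ≤ ε := by
    have h : η * (d + 1) ≤ ε := (le_div_iff₀ (by positivity)).mp (min_le_right _ _)
    linarith
  obtain ⟨C, hC, hsum⟩ := hUD.exists_norm_sum_fourierChar_le hη
  have hbump := bumpConst_nonneg η
  refine ⟨(16 / 3) ^ (d - 1) * (1 + C * bumpConst η ^ (d - 1)), by positivity,
    fun N hN y hy t c A hA hAt hAc ↦ ?_⟩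
  have hN1 : (1 : ℝ) ≤ N := by exact_mod_cast hN
  obtain ⟨j, hj⟩ := Function.ne_iff.mp hy
  obtain ⟨i, -, hi⟩ := exists_max_image univ (fun l ↦ |y l|) ⟨j, mem_univ j⟩
  have hyi : y i ≠ 0 := abs_pos.mp ((abs_pos.mpr hj).trans_le (hi j (mem_univ j)))
  have hcard := card_le_of_sum_mul_eq_of_abs_sub_le hη.le hη1 (hsum N hN) (by positivity) hyi
    (fun l ↦ hi l (mem_univ l)) hA hAt hAc hN
  have hpow : (N : ℝ) ^ η * ((N : ℝ) ^ η) ^ (d - 1) ≤ (N : ℝ) ^ ε := by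
    rw [← pow_succ', Nat.sub_add_cancel i.pos, ← rpow_mul_natCast (by positivity)]
    exact rpow_le_rpow_of_exponent_le hN1 hdη
  have hone : 1 ≤ (N : ℝ) ^ (1 - γ + ε) := one_le_rpow hN1 (by linarith)
  rw [card_range, div_self (by positivity), Fintype.card_fin] at hcard
  calc (#A : ℝ) = (16 / 3) ^ (d - 1) * ((3 / 16) ^ (d - 1) * #A) := by
        rw [← mul_assoc, ← mul_pow]
        norm_num
    _ ≤ (16 / 3) ^ (d - 1) * (1 + C * bumpConst η ^ (d - 1) *
          ((N : ℝ) ^ (1 - γ) * ((N : ℝ) ^ η * ((N : ℝ) ^ η) ^ (d - 1)))) := by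
        gcongr
        exact hcard.trans_eq (by ring)
    _ ≤ (16 / 3) ^ (d - 1) * ((N : ℝ) ^ (1 - γ + ε) +
          C * bumpConst η ^ (d - 1) * (N : ℝ) ^ (1 - γ + ε)) := by
        rw [rpow_add (by positivity)] at hone ⊢
        gcongr
    _ = _ := by ring

open scoped Classical in
lemma IsGammaUD.exists_card_dotP_eq_le (hUD : IsGammaUD γ v)
    (hv : ∀ n, v n ∈ Set.Icc (0 : Fin d → ℝ) 1) (hγ : γ ≤ 1) (hε : 0 < ε) :
    ∃ C : ℝ, 0 < C ∧ ∀ N : ℕ, 1 ≤ N → ∀ y : Fin d → ℝ, y ≠ 0 → ∀ t : ℝ,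
      (#{n ∈ range N | dotP (v n) y = t} : ℝ) ≤ C * (N : ℝ) ^ (1 - γ + ε) := by
  obtain ⟨C, hC, hbox⟩ := hUD.exists_card_le_of_abs_sub_le hγ hε
  refine ⟨2 ^ d * C, by positivity, fun N hN y hy t ↦ ?_⟩
  let half : ℕ → Fin d → Bool := fun n l ↦ decide (1 / 2 ≤ v n l)
  let centre : (Fin d → Bool) → Fin d → ℝ := fun σ l ↦ if σ l then 3 / 4 else 1 / 4
  have hcentre (n : ℕ) (l : Fin d) : |v n l - centre (half n) l| ≤ 1 / 4 := by
    have h0 : 0 ≤ v n l := (hv n).1 l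
    have h1 : v n l ≤ 1 := (hv n).2 l
    rw [abs_le]
    by_cases h : 1 / 2 ≤ v n l
    · simp only [centre, half, h, decide_true, if_true]
      constructor <;> linarith
    · simp only [centre, half, h, decide_false, Bool.false_eq_true, if_false]
      constructor <;> linarith
  have hfiber (σ : Fin d → Bool) :
      (#{n ∈ {n ∈ range N | dotP (v n) y = t} | half n = σ} : ℝ) ≤
        C * (N : ℝ) ^ (1 - γ + ε) := by
    refine hbox N hN y hy t (centre σ) _ ((filter_subset _ _).trans (filter_subset _ _))
      (fun n hn ↦ (mem_filter.mp (mem_filter.mp hn).1).2) fun n hn l ↦ ?_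
    rw [← (mem_filter.mp hn).2]
    exact hcentre n l
  calc (#{n ∈ range N | dotP (v n) y = t} : ℝ)
      = ∑ σ, (#{n ∈ {n ∈ range N | dotP (v n) y = t} | half n = σ} : ℝ) := by
        exact_mod_cast card_eq_sum_card_fiberwise fun n _ ↦ mem_univ (half n)
    _ ≤ ∑ _σ : Fin d → Bool, C * (N : ℝ) ^ (1 - γ + ε) := sum_le_sum fun σ _ ↦ hfiber σ
    _ = 2 ^ d * C * (N : ℝ) ^ (1 - γ + ε) := by simp [mul_assoc]

open scoped Classical in
theorem stmt12_general (hUD : IsGammaUD γ v) (hv : ∀ n, v n ∈ Set.Icc (0 : Fin d → ℝ) 1)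
    (hγ : γ ≤ 1) (w : ℕ → Fin d → ℝ) {t : ℝ} (ht : t ≠ 0) (hε : 0 < ε) :
    ∃ C : ℝ, 0 < C ∧ ∀ N : ℕ, 1 ≤ N →
      (#{p ∈ range N ×ˢ range N | dotP (v p.1) (w p.2) = t} : ℝ) ≤
        C * (N : ℝ) ^ (2 - γ + ε) := by
  obtain ⟨C, hC, hplane⟩ := hUD.exists_card_dotP_eq_le hv hγ hε
  refine ⟨C, hC, fun N hN ↦ ?_⟩
  have hN' : (0 : ℝ) < N := by exact_mod_cast hN
  have hfiber (m : ℕ) :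
      (#{n ∈ range N | dotP (v n) (w m) = t} : ℝ) ≤ C * (N : ℝ) ^ (1 - γ + ε) := by
    rcases eq_or_ne (w m) 0 with hw | hw
    · have hzero (n : ℕ) : dotP (v n) (w m) ≠ t := by simpa [dotP, hw] using ht.symm
      simp only [hzero, filter_false, card_empty, Nat.cast_zero]
      positivity
    · exact hplane N hN (w m) hw t
  calc (#{p ∈ range N ×ˢ range N | dotP (v p.1) (w p.2) = t} : ℝ)
      = ∑ m ∈ range N, (#{n ∈ range N | dotP (v n) (w m) = t} : ℝ) := by
        rw [card_filter, sum_product_right]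
        simp only [← card_filter, Nat.cast_sum]
    _ ≤ ∑ _m ∈ range N, C * (N : ℝ) ^ (1 - γ + ε) := sum_le_sum fun m _ ↦ hfiber m
    _ = C * (N : ℝ) ^ (2 - γ + ε) := by
        rw [sum_const, card_range, nsmul_eq_mul, show 2 - γ + ε = 1 + (1 - γ + ε) by ring,
          rpow_add hN' 1, rpow_one]
        ring

end HyperplaneCount

open scoped Classical in
/-- For `1/2`-uniformly distributed sequences `{v_n}`, `{w_m}` in `[0,1]^d`, `d ≥ 2`,
and a fixed `1/100 ≤ t < d`, the number of pairs with `v_n · w_m = t` is at most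
`C_ε N^{3/2 + ε}`. -/
theorem stmt12 (d : ℕ) (hd : 2 ≤ d)
    (v w : ℕ → Fin d → ℝ)
    (hv : ∀ n, v n ∈ Set.Icc (0 : Fin d → ℝ) 1) (hw : ∀ m, w m ∈ Set.Icc (0 : Fin d → ℝ) 1)
    (hUDv : IsGammaUD (1/2) v) (hUDw : IsGammaUD (1/2) w)
    (t : ℝ) (ht : 1/100 ≤ t) (ht2 : t < d) :
    ∀ ε : ℝ, 0 < ε → ∃ C : ℝ, 0 < C ∧ ∀ N : ℕ, 1 ≤ N →
      ((((Finset.range N) ×ˢ (Finset.range N)).filter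
          (fun p => dotP (v p.1) (w p.2) = t)).card : ℝ)
        ≤ C * (N : ℝ) ^ ((3:ℝ)/2 + ε) := by
  intro ε hε
  convert stmt12_general hUDv hv (by norm_num) w (t := t) (by positivity) hε using 7
  norm_num
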